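/- arXiv:2301.06317 — 2 statements merged into one kernel-verified Lean document; each statement's English description precedes it below -/
import Mathlib

section
/- Let m ≥ 1 be an integer. Then ∑_{k=1}^∞ (H_k² − H_k^{(2)})/k^(m+1) = ((m+2)(m+4)/3)·ζ(m+3) − ζ(2)·ζ(m+1) − 2·∑_{j=2}^{m} ζ(j+1)·ζ(m+2−j) − ∑_{j=1}^{m−1} j·ζ(j+2)·ζ(m+1−j) + (1/m)·∑_{ℓ=1}^{m−1} (m−ℓ)·ζ(m−ℓ+1)·∑_{j=1}^{ℓ−1} ζ(j+1)·ζ(ℓ−j+1). -/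
/-!
Write `a = n + 1` and let `f_a(x) = 1/(a - x) - 1/a = ∑_{k ≥ 1} x^k / a^(k+1)`. The formal power
series `Z = ∑_a f_a = ∑_{k ≥ 1} ζ(k+1) x^k` generates the zeta values, and products of distinct
`f_a` split by partial fractions: `f_a f_b = g_b(a) f_a + g_a(b) f_b` with
`g_b(a) = a / (b (b - a)) = 1/(b - a) - 1/b`. Moreover `g_a(c) = f_a(c)`, so the numbers `g` obey the
same rule. From these two facts alone, for the partial sums `P = ∑_{a ≤ N} f_a`, one gets
(`sq_sum_range`, `cube_sum_range`)

* `P² = ∑_a (f_a² + 2 T_a f_a)`,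
* `P³ = ∑_a (f_a³ + 3 T_a f_a² + 3 (T_a² + R_a) f_a)`,

where `T_a = ∑_{b ≠ a} g_b(a)` and `R_a = ∑_{b ≠ a} g_b(a) g_a(b) = -∑_{b ≠ a} 1/(b - a)²`, the sums
being over `b ≤ N`. As `N → ∞`, `T_a → 2/a - H_a` and `R_a → -(H_{a-1}^{(2)} + ζ(2))`. Comparing
coefficients and passing to the limit by dominated convergence (`|T_a| ≤ 4 H_a`, `H_a = O(a^{1/4})`),
the square gives Euler's formula for `∑_a H_a / a^(n+1)` (`coeff_Z_sq`), and the cube expresses the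
series `∑_a (H_a² - H_a^{(2)}) / a^(m+1)` through the `m`-th coefficient of `Z³` and Euler sums
(`coeff_Z_cube`).

The sums on the right-hand side of the theorem are coefficients of products of `Z` and
`θ Z = x Z'`. Since `Z² θ Z = θ(Z³) / 3` and `Z θ Z = θ(Z²) / 2`, the weighted sums reduce to
coefficients of `Z³` and `Z²` (`sum_triple`, `sum_weighted`), and the theorem follows by linear
algebra.
-/

/-- The harmonic number `H_n = ∑_{k=1}^n 1/k`. -/
noncomputable def H (n : ℕ) : ℝ := ∑ i ∈ Finset.range n, (1 : ℝ) / (i + 1)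

/-- The generalized harmonic number `H_n^{(2)} = ∑_{k=1}^n 1/k²`. -/
noncomputable def H2 (n : ℕ) : ℝ := ∑ i ∈ Finset.range n, (1 : ℝ) / (i + 1) ^ 2

/-- The Riemann zeta function at integer arguments, `ζ(s) = ∑_{n=1}^∞ 1/n^s`. -/
noncomputable def zeta (s : ℕ) : ℝ := ∑' n : ℕ, (1 : ℝ) / (n + 1) ^ s

open Finset Filter Topology

/-! ### Squares and cubes of sums of elements that multiply by partial fractions -/

theorem sq_sum_range {A : Type*} [CommRing A] (f : ℕ → A) (g : ℕ → ℕ → A)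
    (hg : ∀ a, g a a = 0) (N : ℕ)
    (hf : ∀ a < N, ∀ b < N, a ≠ b → f a * f b = g b a * f a + g a b * f b) :
    (∑ a ∈ range N, f a) ^ 2 =
      ∑ a ∈ range N, (f a ^ 2 + 2 * (∑ b ∈ range N, g b a) * f a) := by
  induction N with
  | zero => simp
  | succ N ih =>
    have ih' := ih fun a ha b hb => hf a (by omega) b (by omega)
    have hcross : (∑ a ∈ range N, f a) * f N =
        ∑ a ∈ range N, g N a * f a + (∑ a ∈ range N, g a N) * f N := by
      rw [sum_mul, sum_mul, ← sum_add_distrib]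
      refine sum_congr rfl fun a ha => ?_
      have := mem_range.1 ha
      exact hf a (by omega) N (by omega) (by omega)
    have hexp : ∑ a ∈ range N, (f a ^ 2 + 2 * (∑ b ∈ range (N + 1), g b a) * f a) =
        ∑ a ∈ range N, (f a ^ 2 + 2 * (∑ b ∈ range N, g b a) * f a) +
          2 * ∑ a ∈ range N, g N a * f a := by
      rw [mul_sum, ← sum_add_distrib]
      refine sum_congr rfl fun a _ => ?_
      rw [sum_range_succ]; ring
    rw [sum_range_succ f, sum_range_succ _ N, hexp, ← ih', sum_range_succ _ N, hg]
    linear_combination 2 * hcross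

/-- The hypothesis `hgg` is the partial fraction rule `hf` for `a ↦ g a c`. It is what allows
`sq_sum_range` to be applied to the new sum `∑ a ∈ range N, g a N` in the induction step. -/
theorem cube_sum_range {A : Type*} [CommRing A] (f : ℕ → A) (g : ℕ → ℕ → A)
    (hg : ∀ a, g a a = 0)
    (hgg : ∀ a b c, a ≠ b → a ≠ c → b ≠ c → g a c * g b c = g b a * g a c + g a b * g b c)
    (hf : ∀ a b, a ≠ b → f a * f b = g b a * f a + g a b * f b) (N : ℕ) :
    (∑ a ∈ range N, f a) ^ 3 =
      ∑ a ∈ range N, (f a ^ 3 + 3 * (∑ b ∈ range N, g b a) * f a ^ 2 +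
        3 * ((∑ b ∈ range N, g b a) ^ 2 + ∑ b ∈ range N, g b a * g a b) * f a) := by
  induction N with
  | zero => simp
  | succ N ih =>
    have hsq := sq_sum_range f g hg N fun a _ b _ => hf a b
    -- the square formula for the specialisation `f a ↦ g a N`
    have hT := sq_sum_range (fun a => g a N) g hg N
      fun a ha b hb hab => hgg a b N hab (by omega) (by omega)
    have hcross : 3 * ((∑ a ∈ range N, f a) ^ 2 * f N + (∑ a ∈ range N, f a) * f N ^ 2) =
        ∑ a ∈ range N, (3 * g N a * f a ^ 2 +
          3 * (2 * (∑ b ∈ range N, g b a) * g N a + g N a ^ 2 + g N a * g a N) * f a) +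
        3 * (∑ a ∈ range N, g a N) * f N ^ 2 +
        3 * ((∑ a ∈ range N, g a N) ^ 2 + ∑ a ∈ range N, g a N * g N a) * f N := by
      rw [hsq, hT]
      simp only [mul_sum, sum_mul, ← sum_add_distrib]
      refine sum_congr rfl fun a ha => ?_
      have h := hf a N (mem_range.1 ha).ne
      simp only [← sum_mul, ← mul_sum]
      linear_combination (3 * f a + 3 * f N + 3 * g a N + 3 * g N a +
        6 * ∑ b ∈ range N, g b a) * h
    have hexp : ∑ a ∈ range N, (f a ^ 3 + 3 * (∑ b ∈ range (N + 1), g b a) * f a ^ 2 +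
        3 * ((∑ b ∈ range (N + 1), g b a) ^ 2 + ∑ b ∈ range (N + 1), g b a * g a b) * f a) =
        ∑ a ∈ range N, (f a ^ 3 + 3 * (∑ b ∈ range N, g b a) * f a ^ 2 +
        3 * ((∑ b ∈ range N, g b a) ^ 2 + ∑ b ∈ range N, g b a * g a b) * f a) +
        ∑ a ∈ range N, (3 * g N a * f a ^ 2 +
          3 * (2 * (∑ b ∈ range N, g b a) * g N a + g N a ^ 2 + g N a * g a N) * f a) := by
      rw [← sum_add_distrib]
      refine sum_congr rfl fun a _ => ?_
      rw [sum_range_succ, sum_range_succ]; ring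
    rw [sum_range_succ f, sum_range_succ _ N, hexp, ← ih, sum_range_succ _ N,
      sum_range_succ (fun b => g b N * g N b), hg]
    linear_combination hcross

/-! ### The power series `f_a` and their partial fractions -/

/-- The power series `f_a = 1/(a - x) - 1/a` for `a = n + 1`, written as
`a⁻² x ∑_k (x/a)^k`. -/
noncomputable def pf (n : ℕ) : PowerSeries ℝ :=
  PowerSeries.C ((1 / ((n : ℝ) + 1)) ^ 2) * PowerSeries.X *
    PowerSeries.rescale (1 / ((n : ℝ) + 1)) (PowerSeries.mk 1)

/-- The partial fraction coefficient `g_b(a) = a / (b (b - a))`, with both indices shifted by one: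
`pc b a` belongs to the integers `b + 1` and `a + 1`. On the diagonal the division by zero makes it
`0`, so sums of `pc b a` over all `b` are sums over `b ≠ a`. -/
noncomputable def pc (b a : ℕ) : ℝ := ((a : ℝ) + 1) / (((b : ℝ) + 1) * ((b : ℝ) - a))

theorem pc_self (a : ℕ) : pc a a = 0 := by simp [pc]

theorem pc_mul_pc (a b c : ℕ) (hab : a ≠ b) (hac : a ≠ c) (hbc : b ≠ c) :
    pc a c * pc b c = pc b a * pc a c + pc a b * pc b c := by
  have h1 : (a : ℝ) - b ≠ 0 := sub_ne_zero.2 (by exact_mod_cast hab)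
  have h2 : (a : ℝ) - c ≠ 0 := sub_ne_zero.2 (by exact_mod_cast hac)
  have h3 : (b : ℝ) - c ≠ 0 := sub_ne_zero.2 (by exact_mod_cast hbc)
  have h4 : (b : ℝ) - a ≠ 0 := sub_ne_zero.2 (by exact_mod_cast hab.symm)
  have h5 : (b : ℝ) - a = -(a - b) := by ring
  unfold pc
  rw [h5]
  field_simp
  ring

theorem geom_inv (c : ℝ) :
    (1 - PowerSeries.C c * PowerSeries.X) * PowerSeries.rescale c (PowerSeries.mk 1) = 1 := by
  have h := congrArg (PowerSeries.rescale c) (PowerSeries.mk_one_mul_one_sub_eq_one ℝ)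
  rw [map_mul, map_sub, map_one, PowerSeries.rescale_X] at h
  rw [mul_comm]; exact h

theorem pf_mul_pf (a b : ℕ) (hab : a ≠ b) :
    pf a * pf b = PowerSeries.C (pc b a) * pf a + PowerSeries.C (pc a b) * pf b := by
  have h1 : (a : ℝ) - b ≠ 0 := sub_ne_zero.2 (by exact_mod_cast hab)
  have h4 : (b : ℝ) - a ≠ 0 := sub_ne_zero.2 (by exact_mod_cast hab.symm)
  unfold pf
  have hc := geom_inv (1 / ((a : ℝ) + 1))
  have hd := geom_inv (1 / ((b : ℝ) + 1))
  have ha : pc b a * (1 / ((a : ℝ) + 1)) ^ 2 = - (pc a b * (1 / ((b : ℝ) + 1)) ^ 2) := by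
    have h5 : (b : ℝ) - a = -(a - b) := by ring
    unfold pc; rw [h5]; field_simp
  have hb : pc b a * (1 / ((a : ℝ) + 1)) ^ 2 * (1 / ((a : ℝ) + 1) - 1 / ((b : ℝ) + 1)) =
      (1 / ((a : ℝ) + 1)) ^ 2 * (1 / ((b : ℝ) + 1)) ^ 2 := by
    unfold pc; field_simp; ring
  have ha' := congrArg (PowerSeries.C (R := ℝ)) ha
  have hb' := congrArg (PowerSeries.C (R := ℝ)) hb
  simp only [map_mul, map_neg, map_sub] at ha' hb'
  generalize PowerSeries.rescale (1 / ((a : ℝ) + 1)) (PowerSeries.mk 1) = G at *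
  generalize PowerSeries.rescale (1 / ((b : ℝ) + 1)) (PowerSeries.mk 1) = G' at *
  generalize PowerSeries.C ((1 / ((a : ℝ) + 1)) ^ 2) = c2 at *
  generalize PowerSeries.C ((1 / ((b : ℝ) + 1)) ^ 2) = d2 at *
  generalize PowerSeries.C (1 / ((a : ℝ) + 1)) = c at *
  generalize PowerSeries.C (1 / ((b : ℝ) + 1)) = d at *
  generalize PowerSeries.C (pc b a) = p at *
  generalize PowerSeries.C (pc a b) = q at *
  generalize (PowerSeries.X : PowerSeries ℝ) = X at *
  -- `G - G' = (c - d) * X * G * G'`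
  have hG : G - G' = (c - d) * X * G * G' := by linear_combination G' * hc - G * hd
  linear_combination (-X ^ 2 * G * G') * hb' - X * G' * ha' - (p * c2 * X) * hG

/-- Truncated subtraction is harmless here, since `m ≥ 1`; the coefficient at `m = 0` is `0`. -/
theorem coeff_pf_pow (n d m : ℕ) (hm : 1 ≤ m) :
    PowerSeries.coeff m (pf n ^ (d + 1)) =
      ((m - 1).choose d : ℝ) * (1 / ((n : ℝ) + 1)) ^ (m + d + 1) := by
  unfold pf
  rw [mul_pow, mul_pow, ← map_pow, ← map_pow, PowerSeries.mk_one_pow_eq_mk_choose_add, mul_assoc,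
    PowerSeries.coeff_C_mul, PowerSeries.coeff_X_pow_mul']
  split_ifs with h
  · rw [PowerSeries.coeff_rescale, PowerSeries.coeff_mk, show d + (m - (d + 1)) = m - 1 by omega]
    rw [← mul_assoc, ← pow_mul, ← pow_add, mul_comm]
    congr 2; omega
  · rw [Nat.choose_eq_zero_of_lt (by omega)]; simp

/-! ### The coefficients `T_a` and `R_a` and their limits -/

/-- `T_a = ∑_{b ≠ a} g_b(a)`, over `b ≤ N`, with `a` shifted by one. -/
noncomputable def T (N a : ℕ) : ℝ := ∑ b ∈ range N, pc b a

/-- `R_a = ∑_{b ≠ a} g_b(a) g_a(b)`, over `b ≤ N`, with `a` shifted by one. -/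
noncomputable def R (N a : ℕ) : ℝ := ∑ b ∈ range N, pc b a * pc a b

theorem T_eq (M n : ℕ) : T (n + 1 + M) n = H M - H (n + 1 + M) + 2 / ((n : ℝ) + 1) - H (n + 1) := by
  have h : ∀ b, pc b n = 1 / ((b : ℝ) - n) - 1 / ((b : ℝ) + 1) + if b = n then 1 / ((n : ℝ) + 1) else 0 := by
    intro b
    by_cases hb : b = n
    · -- here `1 / (b - n)` is `0`, and the last term compensates `-1 / (b + 1)`
      subst hb; simp [pc]
    · have : (b : ℝ) - n ≠ 0 := sub_ne_zero.2 (by exact_mod_cast hb)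
      simp only [pc, hb, if_false]
      field_simp; ring
  have h1 : ∑ b ∈ range (n + 1 + M), 1 / ((b : ℝ) - n) = -H n + H M := by
    rw [sum_range_add, sum_range_succ, ← sum_range_reflect]
    unfold H
    rw [← sum_neg_distrib]
    simp only [sub_self, div_zero, add_zero]
    congr 1
    · refine sum_congr rfl fun j hj => ?_
      have := mem_range.1 hj
      rw [show n - 1 - j = n - (j + 1) by omega, Nat.cast_sub (by omega), ← one_div_neg_eq_neg_one_div]
      congr 1; push_cast; ring
    · refine sum_congr rfl fun j hj => ?_
      congr 1; push_cast; ring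
  have h2 : H (n + 1) = H n + 1 / ((n : ℝ) + 1) := by unfold H; rw [sum_range_succ]
  unfold T
  simp only [h, sum_add_distrib, sum_sub_distrib, h1]
  rw [sum_ite_eq' (range (n + 1 + M)) n, if_pos (by simp; omega), h2]
  change _ - H _ + _ = _
  ring

theorem R_eq (M n : ℕ) : R (n + 1 + M) n = -(H2 n + H2 M) := by
  have h : ∀ b, pc b n * pc n b = - (1 / ((b : ℝ) - n) ^ 2) := by
    intro b
    by_cases hb : b = n
    · subst hb; simp [pc]
    · have h1 : (b : ℝ) - n ≠ 0 := sub_ne_zero.2 (by exact_mod_cast hb)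
      have h2 : (n : ℝ) - b = -(b - n) := by ring
      simp only [pc]; rw [h2]
      field_simp
  unfold R
  simp only [h, sum_neg_distrib]
  rw [sum_range_add, sum_range_succ, ← sum_range_reflect]
  unfold H2
  simp only [sub_self, ne_eq, OfNat.ofNat_ne_zero, not_false_eq_true, zero_pow, div_zero, add_zero]
  congr 2
  · refine sum_congr rfl fun j hj => ?_
    have := mem_range.1 hj
    rw [show n - 1 - j = n - (j + 1) by omega, Nat.cast_sub (by omega)]
    congr 1; push_cast; ring
  · refine sum_congr rfl fun j hj => ?_
    congr 1; push_cast; ring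

theorem H_add (M k : ℕ) : H (k + M) - H M = ∑ i ∈ range k, 1 / ((M : ℝ) + i + 1) := by
  unfold H
  rw [add_comm k M, sum_range_add]; push_cast; ring

theorem tendsto_H_diff (k : ℕ) : Tendsto (fun M => H M - H (k + M)) atTop (𝓝 0) := by
  have h : ∀ M, H M - H (k + M) = ∑ i ∈ range k, -(1 / (((M + i : ℕ) : ℝ) + 1)) := fun M => by
    rw [sum_neg_distrib, ← neg_sub, H_add]; push_cast; rfl
  simp only [h]
  rw [← sum_const_zero (s := range k)]
  refine tendsto_finsetSum _ fun i _ => ?_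
  rw [← neg_zero]
  exact ((tendsto_one_div_add_atTop_nhds_zero_nat (𝕜 := ℝ)).comp (tendsto_add_atTop_nat i)).neg

theorem summable_zeta {s : ℕ} (hs : 2 ≤ s) : Summable fun n : ℕ => (1 : ℝ) / ((n : ℝ) + 1) ^ s := by
  have := (summable_nat_add_iff 1).2 (Real.summable_one_div_nat_pow (p := s).2 (by omega))
  simpa using this

theorem tendsto_H2 : Tendsto H2 atTop (𝓝 (zeta 2)) :=
  (summable_zeta le_rfl).hasSum.tendsto_sum_nat

theorem H2_le (n : ℕ) : H2 n ≤ zeta 2 :=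
  (summable_zeta le_rfl).sum_le_tsum _ fun _ _ => by positivity

theorem H2_nonneg (n : ℕ) : 0 ≤ H2 n := sum_nonneg fun _ _ => by positivity

theorem tendsto_T (n : ℕ) : Tendsto (fun N => T N n) atTop (𝓝 (2 / ((n : ℝ) + 1) - H (n + 1))) := by
  rw [← tendsto_add_atTop_iff_nat (n + 1)]
  have := ((tendsto_H_diff (n + 1)).add_const (2 / ((n : ℝ) + 1))).sub_const (H (n + 1))
  rw [zero_add] at this
  refine this.congr fun M => ?_
  rw [add_comm M, T_eq]

theorem tendsto_R (n : ℕ) : Tendsto (fun N => R N n) atTop (𝓝 (-(H2 n + zeta 2))) := by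
  rw [← tendsto_add_atTop_iff_nat (n + 1)]
  refine (tendsto_H2.const_add (H2 n)).neg.congr fun M => ?_
  rw [add_comm M, R_eq]

theorem abs_T_le {N n : ℕ} (h : n < N) : |T N n| ≤ 4 * H (n + 1) := by
  obtain ⟨M, rfl⟩ := Nat.exists_eq_add_of_le (Nat.succ_le_of_lt h)
  have h1 := H_add M (n + 1)
  have h2 : ∑ i ∈ range (n + 1), 1 / ((M : ℝ) + i + 1) ≤ H (n + 1) := by
    refine sum_le_sum fun i _ => ?_
    gcongr
    linarith [(Nat.cast_nonneg M : (0 : ℝ) ≤ M)]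
  have h3 : 0 ≤ ∑ i ∈ range (n + 1), 1 / ((M : ℝ) + i + 1) := sum_nonneg fun _ _ => by positivity
  have h4 : 1 / ((n : ℝ) + 1) ≤ H (n + 1) :=
    single_le_sum (f := fun i : ℕ => (1 : ℝ) / (i + 1)) (fun _ _ => by positivity) (self_mem_range_succ n)
  have h5 : 0 < 1 / ((n : ℝ) + 1) := by positivity
  have h6 : 2 / ((n : ℝ) + 1) = 2 * (1 / ((n : ℝ) + 1)) := by ring
  rw [T_eq, h6, abs_le]
  constructor <;> linarith

theorem abs_R_le {N n : ℕ} (h : n < N) : |R N n| ≤ 2 * zeta 2 := by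
  obtain ⟨M, rfl⟩ := Nat.exists_eq_add_of_le (Nat.succ_le_of_lt h)
  rw [R_eq, abs_neg, abs_of_nonneg (add_nonneg (H2_nonneg _) (H2_nonneg _))]
  linarith [H2_le n, H2_le M]

theorem H_nonneg (n : ℕ) : 0 ≤ H n := sum_nonneg fun _ _ => by positivity

/-- Any exponent below `1/2` would do: it makes `H_a² / a²` summable. -/
theorem H_le (n : ℕ) : H (n + 1) ≤ 5 * ((n : ℝ) + 1) ^ (1 / 4 : ℝ) := by
  have h1 : H (n + 1) = (harmonic (n + 1) : ℝ) := by
    unfold H harmonic; push_cast; simp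
  have h2 := harmonic_le_one_add_log (n + 1)
  have h3 := Real.log_le_rpow_div (x := ((n + 1 : ℕ) : ℝ)) (by positivity) (ε := 1 / 4) (by norm_num)
  have h4 : 1 ≤ ((n : ℝ) + 1) ^ (1 / 4 : ℝ) := Real.one_le_rpow (by linarith [(Nat.cast_nonneg n : (0 : ℝ) ≤ n)]) (by norm_num)
  push_cast at h2 h3
  rw [h1]; linarith

theorem summable_H_sq {s : ℕ} (hs : 2 ≤ s) :
    Summable fun n : ℕ => H (n + 1) ^ 2 * (1 / ((n : ℝ) + 1)) ^ s := by
  have h0 : Summable fun n : ℕ => 25 * (1 / ((n : ℝ) + 1) ^ (3 / 2 : ℝ)) := by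
    have := (summable_nat_add_iff 1).2 (Real.summable_one_div_nat_rpow (p := 3 / 2).2 (by norm_num))
    exact Summable.mul_left _ (by simpa using this)
  refine Summable.of_nonneg_of_le (fun n => by positivity) (fun n => ?_) h0
  have hn : (0 : ℝ) < (n : ℝ) + 1 := by positivity
  calc H (n + 1) ^ 2 * (1 / ((n : ℝ) + 1)) ^ s
      ≤ (5 * ((n : ℝ) + 1) ^ (1 / 4 : ℝ)) ^ 2 * (1 / ((n : ℝ) + 1)) ^ 2 := by
        have h := H_nonneg (n + 1)
        refine mul_le_mul (pow_le_pow_left₀ h (H_le n) 2) ?_ (by positivity) (by positivity)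
        refine pow_le_pow_of_le_one (by positivity) ?_ hs
        rw [div_le_one hn]; linarith [(Nat.cast_nonneg n : (0 : ℝ) ≤ n)]
    _ = 25 * (1 / ((n : ℝ) + 1) ^ (3 / 2 : ℝ)) := by
        rw [mul_pow, ← Real.rpow_natCast (_ ^ _), ← Real.rpow_mul hn.le, one_div ((n : ℝ) + 1),
          inv_pow, ← Real.rpow_natCast (_ + 1) 2, ← Real.rpow_neg hn.le, one_div (_ ^ _),
          ← Real.rpow_neg hn.le, mul_assoc, ← Real.rpow_add hn]
        norm_num

theorem one_le_H (n : ℕ) : 1 ≤ H (n + 1) := by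
  have := single_le_sum (f := fun i : ℕ => (1 : ℝ) / (i + 1)) (fun _ _ => by positivity) (mem_range.2 n.succ_pos)
  simpa [H] using this

/-- Dominated convergence for triangular sums, with `H_a² / a^s` as the dominating series. -/
theorem tendsto_sum_range {F : ℕ → ℕ → ℝ} {G : ℕ → ℝ} (C : ℝ) {s : ℕ} (hs : 2 ≤ s)
    (hF : ∀ n, Tendsto (fun N => F N n) atTop (𝓝 (G n)))
    (hb : ∀ N n, n < N → |F N n| ≤ C * H (n + 1) ^ 2) :
    Summable (fun n => G n * (1 / ((n : ℝ) + 1)) ^ s) ∧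
    Tendsto (fun N => ∑ n ∈ range N, F N n * (1 / ((n : ℝ) + 1)) ^ s) atTop
      (𝓝 (∑' n, G n * (1 / ((n : ℝ) + 1)) ^ s)) := by
  have hsum : Summable fun n : ℕ => C * (H (n + 1) ^ 2 * (1 / ((n : ℝ) + 1)) ^ s) :=
    (summable_H_sq hs).mul_left C
  have hG : ∀ n, |G n| ≤ C * H (n + 1) ^ 2 := fun n =>
    le_of_tendsto (hF n).abs ((eventually_gt_atTop n).mono fun N hN => hb N n hN)
  constructor
  · refine Summable.of_norm_bounded hsum fun n => ?_
    rw [norm_mul, Real.norm_eq_abs, Real.norm_of_nonneg (by positivity), ← mul_assoc]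
    exact mul_le_mul_of_nonneg_right (hG n) (by positivity)
  · have hind : ∀ N, ∑ n ∈ range N, F N n * (1 / ((n : ℝ) + 1)) ^ s =
        ∑' n, if n < N then F N n * (1 / ((n : ℝ) + 1)) ^ s else 0 := fun N => by
      rw [tsum_eq_sum (s := range N) fun n hn => if_neg (by simpa using hn)]
      exact sum_congr rfl fun n hn => (if_pos (mem_range.1 hn)).symm
    simp only [hind]
    refine tendsto_tsum_of_dominated_convergence hsum (fun n => ?_) (.of_forall fun N n => ?_)
    · refine ((hF n).mul_const _).congr' ?_
      filter_upwards [eventually_gt_atTop n] with N hN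
      rw [if_pos hN]
    · split_ifs with h
      · rw [norm_mul, Real.norm_eq_abs, Real.norm_of_nonneg (by positivity), ← mul_assoc]
        exact mul_le_mul_of_nonneg_right (hb N n h) (by positivity)
      · have := (abs_nonneg _).trans (hG n)
        rw [norm_zero, ← mul_assoc]; positivity

/-! ### Coefficients of the square and the cube of the zeta generating series -/

/-- The generating series `∑_{k ≥ 1} ζ(k+1) x^k`, which is the coefficientwise limit of the partial
sums of `pf`. -/
noncomputable def Z : PowerSeries ℝ := PowerSeries.mk fun k => if k = 0 then 0 else zeta (k + 1)

theorem coeff_Z {k : ℕ} (hk : k ≠ 0) : PowerSeries.coeff k Z = zeta (k + 1) := by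
  simp [Z, hk]

theorem coeff_zero_Z : PowerSeries.coeff 0 Z = 0 := by simp [Z]

theorem tendsto_coeff_pow (j m : ℕ) :
    Tendsto (fun N => PowerSeries.coeff m ((∑ n ∈ range N, pf n) ^ j)) atTop
      (𝓝 (PowerSeries.coeff m (Z ^ j))) := by
  induction j generalizing m with
  | zero => simp
  | succ j ih =>
    simp only [pow_succ, PowerSeries.coeff_mul]
    refine tendsto_finsetSum _ fun p _ => (ih p.1).mul ?_
    simp only [map_sum]
    rcases Nat.eq_zero_or_pos p.2 with h | h
    · rw [h, coeff_zero_Z]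
      simp [pf, mul_assoc]
    · rw [coeff_Z h.ne']
      refine (summable_zeta (s := p.2 + 1) (by omega)).hasSum.tendsto_sum_nat.congr fun N => ?_
      refine sum_congr rfl fun n _ => ?_
      have := coeff_pf_pow n 0 p.2 h
      simp only [zero_add, pow_one, Nat.choose_zero_right, Nat.cast_one, one_mul, add_zero] at this
      rw [this, one_div_pow]

theorem hasSum_zeta {s : ℕ} (hs : 2 ≤ s) :
    HasSum (fun n : ℕ => (1 / ((n : ℝ) + 1)) ^ s) (zeta s) := by
  simp only [one_div_pow]
  exact (summable_zeta hs).hasSum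

/-- The linear Euler sum `∑_{a ≥ 1} H_a / a^s`. -/
noncomputable def E (s : ℕ) : ℝ := ∑' n : ℕ, H (n + 1) * (1 / ((n : ℝ) + 1)) ^ s

theorem hasSum_E {s : ℕ} (hs : 2 ≤ s) :
    HasSum (fun n : ℕ => H (n + 1) * (1 / ((n : ℝ) + 1)) ^ s) (E s) := by
  refine Summable.hasSum (tendsto_sum_range (F := fun _ n => H (n + 1)) 1 hs
    (fun n => tendsto_const_nhds) fun _ n _ => ?_).1
  rw [abs_of_nonneg (H_nonneg _)]
  nlinarith [one_le_H n]

theorem tendsto_sum_T {s : ℕ} (hs : 2 ≤ s) :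
    Tendsto (fun N => ∑ n ∈ range N, T N n * (1 / ((n : ℝ) + 1)) ^ s) atTop
      (𝓝 (2 * zeta (s + 1) - E s)) := by
  have h := (tendsto_sum_range (F := T) 4 hs tendsto_T fun N n hn =>
    (abs_T_le hn).trans (by nlinarith [one_le_H n])).2
  convert h using 2
  refine (HasSum.tsum_eq ?_).symm
  refine (((hasSum_zeta (s := s + 1) (by omega)).mul_left 2).sub (hasSum_E hs)).congr_fun ?_
  intro n
  ring

/-- Euler's evaluation of the linear sums `E (n + 1)` by zeta values. -/
theorem coeff_Z_sq {n : ℕ} (hn : 1 ≤ n) :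
    PowerSeries.coeff n (Z ^ 2) = (n + 3) * zeta (n + 2) - 2 * E (n + 1) := by
  have h1 := (hasSum_zeta (s := n + 2) (by omega)).tendsto_sum_nat.const_mul ((n : ℝ) - 1)
  have h2 := (tendsto_sum_T (s := n + 1) (by omega)).const_mul 2
  refine (tendsto_nhds_unique ((h1.add h2).congr fun N => ?_) (tendsto_coeff_pow 2 n)).symm.trans ?_
  · rw [sq_sum_range pf (fun b a => PowerSeries.C (pc b a)) (by simp [pc_self]) N
      fun a _ b _ => pf_mul_pf a b, map_sum, mul_sum, mul_sum, ← sum_add_distrib]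
    refine sum_congr rfl fun a _ => ?_
    have e1 := coeff_pf_pow a 1 n hn
    have e0 := coeff_pf_pow a 0 n hn
    rw [zero_add, pow_one] at e0
    rw [map_add, e1, ← map_sum, mul_assoc, ← map_ofNat (PowerSeries.C (R := ℝ)) 2,
      PowerSeries.coeff_C_mul, PowerSeries.coeff_C_mul, e0]
    simp [T, Nat.cast_sub hn]
  · ring

theorem coeff_Z_cube {m : ℕ} (hm : 1 ≤ m) :
    PowerSeries.coeff m (Z ^ 3) = ((m : ℝ) - 1) * (m - 2) / 2 * zeta (m + 3) +
      3 * (m - 1) * (2 * zeta (m + 3) - E (m + 2)) +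
      3 * (5 * zeta (m + 3) - 4 * E (m + 2) - zeta 2 * zeta (m + 1) +
        ∑' k : ℕ, (H (k + 1) ^ 2 - H2 (k + 1)) / (k + 1 : ℝ) ^ (m + 1)) := by
  have hz : 0 ≤ zeta 2 := (H2_nonneg 0).trans (H2_le 0)
  have hS : Summable fun k : ℕ => (H (k + 1) ^ 2 - H2 (k + 1)) * (1 / (k + 1 : ℝ)) ^ (m + 1) := by
    refine (tendsto_sum_range (F := fun _ k => H (k + 1) ^ 2 - H2 (k + 1)) (1 + zeta 2) (by omega)
      (fun n => tendsto_const_nhds) fun _ n _ => ?_).1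
    have h1 := one_le_H n
    have h2 : 1 ≤ H (n + 1) ^ 2 := one_le_pow₀ h1
    rw [abs_le]
    constructor <;> nlinarith [H2_nonneg (n + 1), H2_le (n + 1), mul_nonneg hz (sub_nonneg.2 h2)]
  have hD : Tendsto (fun N => ∑ n ∈ range N, (T N n ^ 2 + R N n) * (1 / ((n : ℝ) + 1)) ^ (m + 1))
      atTop (𝓝 (5 * zeta (m + 3) - 4 * E (m + 2) - zeta 2 * zeta (m + 1) +
        ∑' k : ℕ, (H (k + 1) ^ 2 - H2 (k + 1)) * (1 / (k + 1 : ℝ)) ^ (m + 1))) := by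
    have h := (tendsto_sum_range (F := fun N n => T N n ^ 2 + R N n) (s := m + 1)
      (16 + 2 * zeta 2) (by omega) (fun n => ((tendsto_T n).pow 2).add (tendsto_R n))
      fun N n hn => ?_).2
    · convert h using 2
      refine (HasSum.tsum_eq ?_).symm
      refine (((((hasSum_zeta (s := m + 3) (by omega)).mul_left 5).sub
        ((hasSum_E (s := m + 2) (by omega)).mul_left 4)).sub
        ((hasSum_zeta (s := m + 1) (by omega)).mul_left (zeta 2))).add hS.hasSum).congr_fun ?_
      intro n
      have h2 : H2 (n + 1) = H2 n + (1 / ((n : ℝ) + 1)) ^ 2 := by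
        unfold H2; rw [sum_range_succ, one_div_pow]
      rw [h2]
      ring
    · have h1 : T N n ^ 2 ≤ (4 * H (n + 1)) ^ 2 := sq_le_sq' (abs_le.1 (abs_T_le hn)).1
        (abs_le.1 (abs_T_le hn)).2
      have h2 : 1 ≤ H (n + 1) ^ 2 := one_le_pow₀ (one_le_H n)
      refine (abs_add_le _ _).trans ?_
      rw [abs_of_nonneg (sq_nonneg _)]
      nlinarith [abs_R_le hn, mul_nonneg hz (sub_nonneg.2 h2)]
  have h1 := (hasSum_zeta (s := m + 3) (by omega)).tendsto_sum_nat.const_mul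
    (((m : ℝ) - 1) * (m - 2) / 2)
  have h2 := (tendsto_sum_T (s := m + 2) (by omega)).const_mul (3 * ((m : ℝ) - 1))
  have h3 := hD.const_mul 3
  simp only [div_eq_mul_one_div (_ - H2 _), ← one_div_pow]
  refine (tendsto_nhds_unique (((h1.add h2).add h3).congr fun N => ?_)
    (tendsto_coeff_pow 3 m)).symm.trans ?_
  · rw [cube_sum_range pf (fun b a => PowerSeries.C (pc b a)) (by simp [pc_self])
      (fun a b c hab hac hbc => by
        simp only [← map_mul, ← map_add]; rw [pc_mul_pc a b c hab hac hbc])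
      pf_mul_pf N, map_sum, mul_sum, mul_sum, mul_sum, ← sum_add_distrib, ← sum_add_distrib]
    refine sum_congr rfl fun a _ => ?_
    have e2 := coeff_pf_pow a 2 m hm
    have e1 := coeff_pf_pow a 1 m hm
    have e0 := coeff_pf_pow a 0 m hm
    rw [zero_add, pow_one] at e0
    have hT : ∑ b ∈ range N, PowerSeries.C (pc b a) = PowerSeries.C (T N a) := by
      rw [T, map_sum]
    have hR : ∑ b ∈ range N, PowerSeries.C (pc b a) * PowerSeries.C (pc a b) =
        PowerSeries.C (R N a) := by
      rw [R, map_sum]; simp only [map_mul]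
    rw [hT, hR, ← map_ofNat (PowerSeries.C (R := ℝ)) 3, ← map_pow, ← map_add, ← map_mul, ← map_mul,
      map_add, map_add, e2, PowerSeries.coeff_C_mul, PowerSeries.coeff_C_mul, e1, e0,
      Nat.cast_choose_two]
    simp only [Nat.cast_sub hm, Nat.choose_one_right, Nat.choose_zero_right, Nat.cast_one]
    ring
  · ring

/-! ### Convolution sums of zeta values as coefficients -/

theorem coeff_mul_eq_sum_Icc (A B : PowerSeries ℝ) (hA : PowerSeries.coeff 0 A = 0)
    (hB : PowerSeries.coeff 0 B = 0) (n : ℕ) :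
    PowerSeries.coeff n (A * B) =
      ∑ i ∈ Icc 1 (n - 1), PowerSeries.coeff i A * PowerSeries.coeff (n - i) B := by
  rw [PowerSeries.coeff_mul, Nat.sum_antidiagonal_eq_sum_range_succ_mk]
  refine (sum_subset (fun i hi => ?_) fun i hi hi' => ?_).symm
  · simp only [mem_Icc, mem_range] at *; omega
  · simp only [mem_Icc, mem_range] at *
    rcases Nat.eq_zero_or_pos i with rfl | h
    · simp [hA]
    · rw [show n - i = 0 by omega, hB, mul_zero]

/-- The Euler operator `A ↦ x A'`. -/
noncomputable def θ (A : PowerSeries ℝ) : PowerSeries ℝ :=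
  PowerSeries.X * PowerSeries.derivative ℝ A

theorem coeff_θ (A : PowerSeries ℝ) (n : ℕ) :
    PowerSeries.coeff n (θ A) = n * PowerSeries.coeff n A := by
  unfold θ
  cases n with
  | zero => simp
  | succ n => rw [PowerSeries.coeff_succ_X_mul, PowerSeries.coeff_derivative]; push_cast; ring

theorem sum_zeta_mul_zeta (l : ℕ) :
    ∑ j ∈ Icc 1 (l - 1), zeta (j + 1) * zeta (l - j + 1) = PowerSeries.coeff l (Z ^ 2) := by
  rw [sq, coeff_mul_eq_sum_Icc _ _ coeff_zero_Z coeff_zero_Z]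
  refine sum_congr rfl fun j hj => ?_
  rw [mem_Icc] at hj
  rw [coeff_Z (by omega), coeff_Z (by omega)]

theorem sum_triple (m : ℕ) :
    ∑ l ∈ Icc 1 (m - 1), ((m - l : ℕ) : ℝ) * zeta (m - l + 1) *
      ∑ j ∈ Icc 1 (l - 1), zeta (j + 1) * zeta (l - j + 1) =
    m / 3 * PowerSeries.coeff m (Z ^ 3) := by
  have h : Z ^ 2 * θ Z = PowerSeries.C (1 / 3) * θ (Z ^ 3) := by
    have h3 : (PowerSeries.C (1 / 3 : ℝ)) * 3 = 1 := by
      rw [← map_ofNat (PowerSeries.C (R := ℝ)) 3, ← map_mul]; norm_num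
    unfold θ
    rw [Derivation.leibniz_pow]
    simp only [smul_eq_mul, nsmul_eq_mul]
    push_cast
    linear_combination (-Z ^ 2 * PowerSeries.X * PowerSeries.derivative ℝ Z) * h3
  have hc := congrArg (PowerSeries.coeff m) h
  rw [coeff_mul_eq_sum_Icc _ _ (by rw [sq, PowerSeries.coeff_mul]; simp [coeff_zero_Z]) (by simp [coeff_θ]),
    PowerSeries.coeff_C_mul, coeff_θ] at hc
  rw [show (m : ℝ) / 3 * PowerSeries.coeff m (Z ^ 3) =
    1 / 3 * (m * PowerSeries.coeff m (Z ^ 3)) by ring, ← hc]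
  refine sum_congr rfl fun l hl => ?_
  rw [mem_Icc] at hl
  rw [sum_zeta_mul_zeta, coeff_θ, coeff_Z (by omega), mul_comm]

theorem sum_double {m : ℕ} (hm : 1 ≤ m) :
    ∑ j ∈ Icc 2 m, zeta (j + 1) * zeta (m + 2 - j) =
      PowerSeries.coeff (m + 1) (Z ^ 2) - zeta 2 * zeta (m + 1) := by
  rw [← sum_zeta_mul_zeta, Nat.add_sub_cancel, ← add_sum_Ioc_eq_sum_Icc hm, ← Icc_succ_left_eq_Ioc,
    show m + 1 - 1 + 1 = m + 1 by omega, add_sub_cancel_left]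
  refine sum_congr rfl fun j hj => ?_
  rw [mem_Icc] at hj
  rw [show m + 2 - j = m + 1 - j + 1 by omega]

theorem sum_weighted {m : ℕ} (hm : 1 ≤ m) :
    ∑ j ∈ Icc 1 (m - 1), (j : ℝ) * zeta (j + 2) * zeta (m + 1 - j) =
      ((m : ℝ) - 1) / 2 * PowerSeries.coeff (m + 1) (Z ^ 2) := by
  have h : θ Z * Z = PowerSeries.C (1 / 2) * θ (Z ^ 2) := by
    have h2 : (PowerSeries.C (1 / 2 : ℝ)) * 2 = 1 := by
      rw [← map_ofNat (PowerSeries.C (R := ℝ)) 2, ← map_mul]; norm_num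
    unfold θ
    rw [Derivation.leibniz_pow]
    simp only [smul_eq_mul, nsmul_eq_mul]
    push_cast
    linear_combination (-Z * PowerSeries.X * PowerSeries.derivative ℝ Z) * h2
  have hc := congrArg (PowerSeries.coeff (m + 1)) h
  have hs := congrArg (PowerSeries.coeff (m + 1)) (sq Z)
  rw [coeff_mul_eq_sum_Icc _ _ (by simp [coeff_θ]) coeff_zero_Z,
    PowerSeries.coeff_C_mul, coeff_θ] at hc
  rw [coeff_mul_eq_sum_Icc _ _ coeff_zero_Z coeff_zero_Z] at hs
  have hI : ∀ (F : ℕ → ℝ) (n : ℕ), ∑ i ∈ Icc 1 n, F i = ∑ i ∈ range n, F (1 + i) := fun F n => by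
    rw [← Ico_add_one_right_eq_Icc, sum_Ico_eq_sum_range, Nat.add_sub_cancel]
  obtain ⟨k, rfl⟩ := Nat.exists_eq_add_of_le' hm
  -- the weight `j` is `i - 1` for `i = j + 1`, and the term `i = 1` vanishes
  have hd : ∑ j ∈ Icc 1 (k + 1 - 1), (j : ℝ) * zeta (j + 2) * zeta (k + 1 + 1 - j) =
      ∑ i ∈ Icc 1 (k + 1 + 1 - 1), (PowerSeries.coeff i (θ Z) * PowerSeries.coeff (k + 1 + 1 - i) Z -
        PowerSeries.coeff i Z * PowerSeries.coeff (k + 1 + 1 - i) Z) := by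
    rw [hI, hI, Nat.add_sub_cancel, Nat.add_sub_cancel, sum_range_succ']
    simp only [coeff_θ]
    rw [add_zero, Nat.cast_one, one_mul, sub_self, add_zero]
    refine sum_congr rfl fun j hj => ?_
    rw [mem_range] at hj
    rw [coeff_Z (by omega), coeff_Z (by omega), show 1 + j + 2 = 1 + (j + 1) + 1 by omega,
      show k + 1 + 1 - (1 + (j + 1)) + 1 = k + 1 + 1 - (1 + j) by omega]
    push_cast
    ring
  rw [hd, sum_sub_distrib, hc, ← hs]
  push_cast
  ring

/-- For an integer `m ≥ 1`,
`∑_{k=1}^∞ (H_k² − H_k^{(2)})/k^(m+1)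
  = ((m+2)(m+4)/3)·ζ(m+3) − ζ(2)·ζ(m+1) − 2·∑_{j=2}^m ζ(j+1)·ζ(m+2−j)
    − ∑_{j=1}^{m−1} j·ζ(j+2)·ζ(m+1−j)
    + (1/m)·∑_{ℓ=1}^{m−1} (m−ℓ)·ζ(m−ℓ+1)·∑_{j=1}^{ℓ−1} ζ(j+1)·ζ(ℓ−j+1)`. -/
theorem sum_harmonic_sq_eq (m : ℕ) (hm : 1 ≤ m) :
    (∑' k : ℕ, (H (k + 1) ^ 2 - H2 (k + 1)) / (k + 1 : ℝ) ^ (m + 1)) =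
      ((m : ℝ) + 2) * ((m : ℝ) + 4) / 3 * zeta (m + 3) - zeta 2 * zeta (m + 1) -
      2 * (∑ j ∈ Finset.Icc 2 m, zeta (j + 1) * zeta (m + 2 - j)) -
      (∑ j ∈ Finset.Icc 1 (m - 1), (j : ℝ) * zeta (j + 2) * zeta (m + 1 - j)) +
      1 / (m : ℝ) *
        (∑ l ∈ Finset.Icc 1 (m - 1), ((m - l : ℕ) : ℝ) * zeta (m - l + 1) *
          ∑ j ∈ Finset.Icc 1 (l - 1), zeta (j + 1) * zeta (l - j + 1)) := by
  have hm0 : (m : ℝ) ≠ 0 := by positivity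
  have h2 := coeff_Z_sq (n := m + 1) (by omega)
  have h3 := coeff_Z_cube hm
  rw [sum_double hm, sum_weighted hm, sum_triple, ← mul_assoc,
    show 1 / (m : ℝ) * (m / 3) = 1 / 3 by field_simp]
  push_cast at h2
  linear_combination (-1 / 3) * h3 + ((m : ℝ) + 3) / 2 * h2
end

section
/- Let m ≥ 0 be an integer and let p ∈ ℂ be such that neither p nor p + 1/2 is a nonpositive integer. Then ∑_{k=0}^∞ (H_k − 2H_{2k})·C(2k,k)/(4^k·(p+k)^(m+1)) = √π·((-1)^m/m!)·(d^m/ds^m)[ (Γ(s)/Γ(s+1/2))·(ψ(1/2) − ψ(s+1/2)) ] evaluated at s = p, where the derivative is the m-th complex derivative at p of the indicated function of s. -/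
/-!
The numbers `(a)_k / k!` are the coefficients of `(1 - x) ^ (-a)`, and at `a = 1/2` they equal
`C(2k,k) / 4 ^ k`. Their logarithmic derivative there is
`∑_{j<k} 1 / (j + 1/2) = 2 H_{2k} - H_k`, so the coefficients of the theorem are minus the
derivatives in `a` at `a = 1/2` (`deriv_rf_half`). The identity therefore follows from
`∑ (a)_k / (k! (s + k)) = B(s, 1 - a) = Γ(s) Γ(1 - a) / Γ(s + 1 - a)` (`tsum_rf_div`)
by differentiating once in `a` (`tsum_cf_div`) and `m` times in `s` (`iteratedDeriv_tsum_cf`).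

For `Re s > 0` the beta evaluation is the termwise integration of
`x ^ (s - 1) (1 - x) ^ (-a)` over `(0, 1)`. Both sides satisfy `s Φ(s) = (s + 1 - a) Φ(s + 1)`,
which carries it to every `s` that is not a nonpositive integer.

All interchanges of limits rest on one majorant: for `‖a‖ ≤ 3/4` the coefficients are at most
`(3/4)_k / k!`, Cauchy's estimate bounds their derivatives at `1/2` by four times that, and
`∑ (3/4)_k / (k! (k + 1))` converges because it telescopes.
-/

/-- The complex digamma function `ψ(z) = Γ'(z)/Γ(z)`. -/
noncomputable def cpsi (z : ℂ) : ℂ := deriv Complex.Gamma z / Complex.Gamma z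

/-- The harmonic number `H_n = ∑_{k=1}^n 1/k` (as a complex number). -/
noncomputable def Hc (n : ℕ) : ℂ := ∑ i ∈ Finset.range n, (1 : ℂ) / (i + 1)

/-! ### Binomial coefficients and their majorant -/

/-- The coefficient `(a)_k / k!` of `x ^ k` in the binomial series of `(1 - x) ^ (-a)`. -/
noncomputable def rf (a : ℂ) (k : ℕ) : ℂ := ∏ j ∈ Finset.range k, (a + j) / (j + 1)

/-- The real number `(3/4)_k / k!`, which dominates `‖rf a k‖` for `‖a‖ ≤ 3/4`. -/
noncomputable def maj (k : ℕ) : ℝ := ∏ j ∈ Finset.range k, (3 / 4 + j : ℝ) / (j + 1)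

lemma rf_succ (a : ℂ) (k : ℕ) : rf a (k + 1) = rf a k * ((a + k) / (k + 1)) := by
  rw [rf, Finset.prod_range_succ, ← rf]

lemma maj_succ (k : ℕ) : maj (k + 1) = maj k * ((3 / 4 + k) / (k + 1)) := by
  rw [maj, Finset.prod_range_succ, ← maj]

lemma maj_pos (k : ℕ) : 0 < maj k := Finset.prod_pos fun j _ => by positivity

lemma norm_rf_le {a : ℂ} (ha : ‖a‖ ≤ 3 / 4) (k : ℕ) : ‖rf a k‖ ≤ maj k := by
  rw [rf, maj, norm_prod]
  refine Finset.prod_le_prod (fun _ _ => norm_nonneg _) fun j _ => ?_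
  rw [norm_div]
  have h1 : ‖(j + 1 : ℂ)‖ = j + 1 := by exact_mod_cast Complex.norm_natCast (j + 1)
  rw [h1]
  gcongr
  exact (norm_add_le _ _).trans (by simpa using ha)

/-- The series telescopes, because `maj k - maj (k + 1) = maj k / (4 * (k + 1))`. -/
lemma summable_maj : Summable fun k : ℕ => maj k / (k + 1) := by
  have key : ∀ n, ∑ k ∈ Finset.range n, maj k / (k + 1) = 4 * (1 - maj n) := by
    intro n
    induction n with
    | zero => simp [maj]
    | succ n ih =>
      rw [Finset.sum_range_succ, ih, maj_succ]
      field_simp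
      ring
  refine summable_of_sum_range_le (c := 4) (fun n => by have := maj_pos n; positivity) fun n => ?_
  rw [key]
  linarith [maj_pos n]

lemma tendsto_maj : Filter.Tendsto maj Filter.atTop (nhds 0) := by
  have h4 : ∀ n, maj n ^ 4 * (n + 1) ≤ 1 := by
    intro n
    induction n with
    | zero => simp [maj]
    | succ n ih =>
      refine le_trans ?_ ih
      rw [maj_succ, mul_pow, mul_assoc]
      refine mul_le_mul_of_nonneg_left ?_ (pow_nonneg (maj_pos n).le 4)
      rw [div_pow, div_mul_eq_mul_div, div_le_iff₀ (by positivity)]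
      push_cast
      have : (0 : ℝ) ≤ n := n.cast_nonneg
      nlinarith [pow_nonneg this 2, pow_nonneg this 3, pow_nonneg this 4]
  have h : Filter.Tendsto (fun n => maj n ^ 4) Filter.atTop (nhds 0) := by
    refine squeeze_zero (fun n => pow_nonneg (maj_pos n).le 4) (fun n => ?_)
      tendsto_one_div_add_atTop_nhds_zero_nat
    rw [le_div_iff₀ (by positivity)]
    exact h4 n
  have h2 := h.sqrt.sqrt
  simp only [Real.sqrt_zero] at h2
  refine h2.congr fun n => ?_
  rw [show maj n ^ 4 = (maj n ^ 2) ^ 2 by ring, Real.sqrt_sq (by positivity),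
    Real.sqrt_sq (maj_pos n).le]

lemma rf_eq_choose (a : ℂ) (k : ℕ) : rf a k = Ring.choose (a + k - 1) k := by
  have h : (k.factorial : ℂ) * rf a k = (ascPochhammer ℂ k).eval a := by
    induction k with
    | zero => simp [rf]
    | succ k ih =>
      rw [ascPochhammer_succ_eval, ← ih, rf_succ, Nat.factorial_succ]
      have : (k + 1 : ℂ) ≠ 0 := by exact_mod_cast k.succ_ne_zero
      push_cast
      field_simp
  have h2 := Ring.factorial_nsmul_multichoose_eq_ascPochhammer a k
  rw [← Ring.multichoose_eq]
  rw [Polynomial.ascPochhammer_smeval_eq_eval, ← h, nsmul_eq_mul] at h2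
  exact (mul_left_cancel₀ (by exact_mod_cast k.factorial_ne_zero) h2).symm

lemma hasSum_rf (a : ℂ) {x : ℂ} (hx : ‖x‖ < 1) :
    HasSum (fun k => rf a k * x ^ k) ((1 - x) ^ (-a)) := by
  have h := (Complex.one_div_one_sub_cpow_hasFPowerSeriesOnBall_zero a).hasSum (y := x)
    (by rw [Metric.mem_eball, edist_zero_right, ← ofReal_norm]
        exact ENNReal.ofReal_lt_one.2 hx)
  simp only [FormalMultilinearSeries.ofScalars_apply_eq, zero_add, smul_eq_mul,
    ← rf_eq_choose, one_div, ← Complex.cpow_neg] at h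
  exact h

/-! ### Linear growth of `s + k` and summability -/

/-- Near a point that is not a nonpositive integer, the distances to the `-k` grow linearly,
uniformly in the point. -/
lemma exists_bound {p : ℂ} (hp : ∀ n : ℕ, p ≠ -n) :
    ∃ δ > 0, ∃ C > 0, ∀ s ∈ Metric.ball p δ, ∀ k : ℕ, (k + 1 : ℝ) ≤ C * ‖s + k‖ := by
  have hne : ∀ k : ℕ, p + k ≠ 0 := fun k h => hp k (eq_neg_of_add_eq_zero_left h)
  obtain ⟨C, hC0, hC⟩ : ∃ C > 0, ∀ k : ℕ, (k + 1 : ℝ) ≤ C * ‖p + k‖ := by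
    -- Beyond `N` the triangle inequality suffices; the finitely many others have a maximum.
    obtain ⟨N, hN⟩ := exists_nat_ge (2 * ‖p‖ + 1)
    refine ⟨2 + ∑ j ∈ Finset.range N, (j + 1) / ‖p + j‖, by positivity, fun k => ?_⟩
    have hk : 0 < ‖p + k‖ := norm_pos_iff.2 (hne k)
    by_cases hkN : k < N
    · have := Finset.single_le_sum (f := fun j : ℕ => (j + 1 : ℝ) / ‖p + j‖)
        (fun j _ => by positivity) (Finset.mem_range.2 hkN)
      rw [← div_le_iff₀ hk]
      linarith
    · have h1 : (N : ℝ) ≤ k := by exact_mod_cast not_lt.1 hkN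
      have h2 : (k : ℝ) ≤ ‖p + k‖ + ‖p‖ := by
        have := norm_sub_le (p + k) p
        simpa using this
      have h3 : 0 ≤ ∑ j ∈ Finset.range N, (j + 1 : ℝ) / ‖p + j‖ := by positivity
      nlinarith [mul_nonneg h3 hk.le]
  refine ⟨1 / (2 * C), by positivity, 2 * C, by positivity, fun s hs k => ?_⟩
  have h1 : ‖p + k‖ ≤ ‖s + k‖ + ‖s - p‖ := by
    have := norm_sub_le (s + k) (s - p)
    rwa [show s + k - (s - p) = p + k by ring] at this
  have h2 : C * ‖s - p‖ ≤ 1 / 2 := by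
    have : ‖s - p‖ < 1 / (2 * C) := by simpa [dist_eq_norm] using hs
    calc C * ‖s - p‖ ≤ C * (1 / (2 * C)) := by gcongr
      _ = 1 / 2 := by field_simp
  have h3 := hC k
  have : (0 : ℝ) ≤ k := k.cast_nonneg
  nlinarith [mul_le_mul_of_nonneg_left h1 hC0.le]

/-- The uniform bound used for every termwise differentiation: linear growth of `s + k` turns a bound
`M` on the coefficient into one by a multiple of `M / (k + 1)`, whatever the exponent. -/
lemma norm_div_pow_le {s : ℂ} {C : ℝ} (hC : 0 < C) {k : ℕ}
    (h : (k + 1 : ℝ) ≤ C * ‖s + k‖) (c : ℂ) (m : ℕ) {M : ℝ} (hc : ‖c‖ ≤ M) :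
    ‖c / (s + k) ^ (m + 1)‖ ≤ C ^ (m + 1) * (M / (k + 1)) := by
  have hpos : 0 < ‖s + k‖ := by
    have : 0 < C * ‖s + k‖ := lt_of_lt_of_le (by positivity) h
    exact pos_of_mul_pos_right this hC.le
  have h1 : (k + 1 : ℝ) ≤ C ^ (m + 1) * ‖s + k‖ ^ (m + 1) := by
    rw [← mul_pow]
    calc (k + 1 : ℝ) ≤ (k + 1 : ℝ) ^ (m + 1) :=
          le_self_pow₀ (by simp) (Nat.succ_ne_zero m)
      _ ≤ _ := by gcongr
  rw [norm_div, norm_pow, div_le_iff₀ (by positivity), mul_div_assoc', div_mul_eq_mul_div,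
    le_div_iff₀ (by positivity)]
  have hM : 0 ≤ M := (norm_nonneg c).trans hc
  calc ‖c‖ * (k + 1) ≤ M * (C ^ (m + 1) * ‖s + k‖ ^ (m + 1)) := by gcongr
    _ = _ := by ring

lemma summable_rf_div {a : ℂ} (ha : ‖a‖ ≤ 3 / 4) {s : ℂ} (hs : ∀ n : ℕ, s ≠ -n) :
    Summable fun k : ℕ => rf a k / (s + k) := by
  obtain ⟨δ, hδ, C, hC, h⟩ := exists_bound hs
  refine Summable.of_norm_bounded (summable_maj.mul_left C) fun k => ?_
  simpa using norm_div_pow_le hC (h s (Metric.mem_ball_self hδ) k) (rf a k) 0 (norm_rf_le ha k)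

/-! ### The series for the beta function -/

open MeasureTheory in
/-- Euler's beta integral with `(1 - x) ^ (-a)` expanded in its binomial series and integrated
term by term. -/
lemma hasSum_of_re_pos {a : ℂ} (ha : ‖a‖ ≤ 3 / 4) {s : ℂ} (hs : 0 < s.re) :
    HasSum (fun k : ℕ => rf a k / (s + k))
      (Complex.Gamma s * Complex.Gamma (1 - a) / Complex.Gamma (s + 1 - a)) := by
  have ha1 : 0 < (1 - a).re := by
    have := (Complex.re_le_norm a).trans ha
    simp only [Complex.sub_re, Complex.one_re]
    linarith
  have hre : ∀ k : ℕ, -1 < (s + k - 1).re := fun k => by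
    simp only [Complex.sub_re, Complex.add_re, Complex.natCast_re, Complex.one_re]
    have : (0 : ℝ) ≤ k := k.cast_nonneg
    linarith
  have hs' : ∀ n : ℕ, s ≠ -n := by
    rintro n rfl
    have : (0 : ℝ) ≤ n := n.cast_nonneg
    simp at hs
    linarith
  set μ : Measure ℝ := volume.restrict (Set.Ioo 0 1)
  let F : ℕ → ℝ → ℂ := fun k x => rf a k * (x : ℂ) ^ (s + k - 1)
  have hint : ∀ k, Integrable (F k) μ := fun k => by
    have := (intervalIntegral.intervalIntegrable_cpow' (a := 0) (b := 1) (hre k)).const_mul (rf a k)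
    rw [intervalIntegrable_iff_integrableOn_Ioo_of_le zero_le_one] at this
    exact this
  have hval : ∀ k, ∫ x, F k x ∂μ = rf a k / (s + k) := fun k => by
    have h0 : s + k ≠ 0 := fun h => hs' k (eq_neg_of_add_eq_zero_left h)
    rw [← integral_Ioc_eq_integral_Ioo, ← intervalIntegral.integral_of_le zero_le_one,
      intervalIntegral.integral_const_mul, integral_cpow (Or.inl (hre k))]
    simp [h0, div_eq_mul_inv]
  have hnorm : ∀ k, ∫ x, ‖F k x‖ ∂μ = ‖rf a k‖ / (s.re + k) := fun k => by
    have h0 : s.re + k ≠ 0 := by positivity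
    have h1 : ∀ x ∈ Set.Ioo (0 : ℝ) 1, ‖F k x‖ = ‖rf a k‖ * x ^ (s.re + k - 1) := fun x hx => by
      simp [F, Complex.norm_cpow_eq_rpow_re_of_pos hx.1]
    have h2 : -1 < s.re + k - 1 := by simpa using hre k
    rw [setIntegral_congr_fun measurableSet_Ioo h1,
      ← integral_Ioc_eq_integral_Ioo, ← intervalIntegral.integral_of_le zero_le_one,
      intervalIntegral.integral_const_mul, integral_rpow (Or.inl h2)]
    simp [h0, div_eq_mul_inv]
  have hsum : Summable fun k => ∫ x, ‖F k x‖ ∂μ := by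
    simp only [hnorm]
    have hr : ∀ n : ℕ, (s.re : ℂ) ≠ -n := by
      intro n h
      have : s.re = -n := by exact_mod_cast h
      have h0 : (0 : ℝ) ≤ n := n.cast_nonneg
      linarith
    refine ((summable_rf_div ha hr).norm).congr fun k => ?_
    rw [norm_div]
    congr 1
    rw [← Complex.ofReal_natCast, ← Complex.ofReal_add, Complex.norm_real, Real.norm_eq_abs,
      abs_of_pos (by positivity)]
  have key := hasSum_integral_of_summable_integral_norm hint hsum
  simp only [hval] at key
  refine (congrArg (HasSum fun k : ℕ => rf a k / (s + k)) ?_).mpr key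
  have hpt : ∀ x ∈ Set.Ioo (0 : ℝ) 1,
      ∑' k, F k x = (x : ℂ) ^ (s - 1) * (1 - (x : ℂ)) ^ ((1 - a) - 1) := fun x hx => by
    have hx0 : (x : ℂ) ≠ 0 := by exact_mod_cast hx.1.ne'
    have h := (hasSum_rf a (x := x)
      (by simpa [abs_of_pos hx.1] using hx.2)).mul_left ((x : ℂ) ^ (s - 1))
    rw [show (1 - a) - 1 = -a by ring, ← h.tsum_eq]
    congr 1 with k
    simp only [F]
    rw [show s + k - 1 = (s - 1) + k by ring, Complex.cpow_add _ _ hx0, Complex.cpow_natCast]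
    ring
  rw [setIntegral_congr_fun measurableSet_Ioo hpt, ← integral_Ioc_eq_integral_Ioo,
    ← intervalIntegral.integral_of_le zero_le_one, ← Complex.betaIntegral,
    Complex.Gamma_mul_Gamma_eq_betaIntegral hs ha1, show s + (1 - a) = s + 1 - a by ring,
    mul_div_cancel_left₀]
  refine Complex.Gamma_ne_zero_of_re_pos ?_
  simp only [Complex.sub_re, Complex.add_re, Complex.one_re] at ha1 ⊢
  linarith

lemma add_one_ne {s : ℂ} (hs : ∀ n : ℕ, s ≠ -n) (n : ℕ) : s + 1 ≠ -n := fun h =>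
  hs (n + 1) (by push_cast; linear_combination h)

/-- The recurrence that the series shares with the beta function, by a partial sum identity with
remainder `rf a N`. -/
lemma tsum_recurrence {a : ℂ} (ha : ‖a‖ ≤ 3 / 4) {s : ℂ} (hs : ∀ n : ℕ, s ≠ -n) :
    s * ∑' k : ℕ, rf a k / (s + k) = (s + 1 - a) * ∑' k : ℕ, rf a k / (s + 1 + k) := by
  have hne : ∀ k : ℕ, s + k ≠ 0 := fun k h => hs k (eq_neg_of_add_eq_zero_left h)
  have hne' : ∀ k : ℕ, s + 1 + k ≠ 0 := fun k h => add_one_ne hs k (eq_neg_of_add_eq_zero_left h)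
  have key : ∀ N : ℕ, s * ∑ k ∈ Finset.range (N + 1), rf a k / (s + k) =
      (s + 1 - a) * ∑ k ∈ Finset.range N, rf a k / (s + 1 + k) + rf a N := by
    intro N
    induction N with
    | zero => simpa [rf] using mul_inv_cancel₀ (by simpa using hne 0)
    | succ N ih =>
      rw [Finset.sum_range_succ, mul_add, ih, Finset.sum_range_succ _ N, rf_succ]
      have h1 := hne' N
      have h2 : (N + 1 : ℂ) ≠ 0 := by exact_mod_cast N.succ_ne_zero
      have h3 : s + (N + 1) ≠ 0 := by rw [← add_assoc, add_right_comm]; exact h1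
      push_cast
      field_simp
      ring
  have h1 := (((summable_rf_div ha hs).hasSum.tendsto_sum_nat).comp
    (Filter.tendsto_add_atTop_nat 1)).const_mul s
  have h0 : Filter.Tendsto (rf a) Filter.atTop (nhds 0) :=
    squeeze_zero_norm (norm_rf_le ha) tendsto_maj
  have h2 := (((summable_rf_div ha (add_one_ne hs)).hasSum.tendsto_sum_nat).const_mul
    (s + 1 - a)).add h0
  rw [add_zero] at h2
  exact tendsto_nhds_unique h1 (h2.congr fun N => (key N).symm)

/-- Gauss's summation in the case `∑ (a)_k / (k! (s + k)) = B(s, 1 - a)`. -/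
lemma tsum_rf_div {a : ℂ} (ha : ‖a‖ ≤ 3 / 4) {s : ℂ} (hs : ∀ n : ℕ, s ≠ -n) :
    ∑' k : ℕ, rf a k / (s + k) =
      Complex.Gamma s * Complex.Gamma (1 - a) / Complex.Gamma (s + 1 - a) := by
  obtain ⟨n, hn⟩ := exists_nat_gt (-s.re)
  induction n generalizing s with
  | zero => exact (hasSum_of_re_pos ha (by simpa using hn)).tsum_eq
  | succ n ih =>
    have h0 : s ≠ 0 := by simpa using hs 0
    have h := tsum_recurrence ha hs
    rw [ih (add_one_ne hs) (by push_cast at hn; simp; linarith), Complex.Gamma_add_one s h0] at h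
    -- The form `1 / Γ(z) = z / Γ(z + 1)` also covers the zeros of `1 / Γ`.
    have h2 := Complex.one_div_Gamma_eq_self_mul_one_div_Gamma_add_one (s + 1 - a)
    rw [show s + 1 - a + 1 = s + 1 + 1 - a by ring] at h2
    rw [div_eq_mul_inv, h2]
    apply mul_left_cancel₀ h0
    rw [h]
    ring

/-! ### Differentiation in the parameter `a` -/

lemma hasDerivAt_rf (k : ℕ) {a : ℂ} (ha : ∀ j : ℕ, a + j ≠ 0) :
    HasDerivAt (fun a => rf a k) (rf a k * ∑ j ∈ Finset.range k, 1 / (a + j)) a := by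
  induction k with
  | zero => simpa [rf] using hasDerivAt_const a (1 : ℂ)
  | succ k ih =>
    simp only [rf_succ]
    convert! ih.mul (((hasDerivAt_id a).add_const (k : ℂ)).div_const (k + 1 : ℂ)) using 1
    rw [Finset.sum_range_succ]
    have := ha k
    simp only [id]
    field_simp

/-- The coefficient `(H_k - 2 H_{2k}) C(2k,k) / 4 ^ k`. -/
noncomputable def cf (k : ℕ) : ℂ := (Hc k - 2 * Hc (2 * k)) * (Nat.choose (2 * k) k : ℂ) / 4 ^ k

lemma rf_half (k : ℕ) : rf (1 / 2) k = (Nat.choose (2 * k) k : ℂ) / 4 ^ k := by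
  induction k with
  | zero => simp [rf]
  | succ k ih =>
    have h := Nat.succ_mul_centralBinom_succ k
    simp only [Nat.centralBinom] at h
    have h' : (k + 1 : ℂ) * (Nat.choose (2 * (k + 1)) (k + 1) : ℂ) =
        2 * (2 * k + 1) * (Nat.choose (2 * k) k : ℂ) := by exact_mod_cast h
    have h2 : (k + 1 : ℂ) ≠ 0 := by exact_mod_cast k.succ_ne_zero
    rw [rf_succ, ih, pow_succ]
    field_simp
    linear_combination (-2 : ℂ) * h'

lemma sum_half (k : ℕ) :
    ∑ j ∈ Finset.range k, 1 / ((1 / 2 : ℂ) + j) = 2 * Hc (2 * k) - Hc k := by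
  induction k with
  | zero => simp [Hc]
  | succ k ih =>
    have h1 : (k + 1 : ℂ) ≠ 0 := by exact_mod_cast k.succ_ne_zero
    have h2 : (2 * k + 1 : ℂ) ≠ 0 := by exact_mod_cast (2 * k).succ_ne_zero
    have h3 : (1 / 2 + k : ℂ) ≠ 0 := fun h => h2 (by linear_combination 2 * h)
    have h4 : (2 * k + 1 + 1 : ℂ) ≠ 0 := by exact_mod_cast (2 * k + 1).succ_ne_zero
    rw [Finset.sum_range_succ, ih, show 2 * (k + 1) = 2 * k + 1 + 1 by ring]
    simp only [Hc, Finset.sum_range_succ]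
    have e1 : 1 / (1 / 2 + k : ℂ) = 2 * (1 / (2 * k + 1)) := by
      rw [show (2 * k + 1 : ℂ) = 2 * (1 / 2 + k) by ring]
      field_simp
    have e2 : 1 / (2 * k + 1 + 1 : ℂ) = 1 / 2 * (1 / (k + 1)) := by field_simp; ring
    push_cast
    rw [e1, e2]
    ring

lemma half_add_ne (j : ℕ) : (1 / 2 : ℂ) + j ≠ 0 := fun h => by
  have : (2 * j + 1 : ℂ) ≠ 0 := by exact_mod_cast (2 * j).succ_ne_zero
  exact this (by linear_combination 2 * h)

/-- `cf k` is minus the derivative of `a ↦ (a)_k / k!` at `1/2`. -/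
lemma deriv_rf_half (k : ℕ) : deriv (fun a => rf a k) (1 / 2) = -cf k := by
  rw [(hasDerivAt_rf k half_add_ne).deriv, sum_half, rf_half, cf]
  ring

lemma differentiable_rf (k : ℕ) : Differentiable ℂ fun a => rf a k := by
  unfold rf
  fun_prop

lemma norm_le_of_mem_closedBall_half {a : ℂ} (ha : a ∈ Metric.closedBall (1 / 2 : ℂ) (1 / 4)) :
    ‖a‖ ≤ 3 / 4 := by
  have h1 : ‖a - 1 / 2‖ ≤ 1 / 4 := by simpa only [Metric.mem_closedBall, dist_eq_norm] using ha
  have h2 : ‖(1 / 2 : ℂ)‖ = 1 / 2 := by norm_num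
  have := norm_add_le (a - 1 / 2) (1 / 2)
  rw [sub_add_cancel] at this
  linarith

/-- Cauchy's estimate on the circle of radius `1/4` about `1/2`. -/
lemma norm_cf_le (k : ℕ) : ‖cf k‖ ≤ 4 * maj k := by
  have h := Complex.norm_deriv_le_of_forall_mem_sphere_norm_le (f := fun a => rf a k)
    (c := 1 / 2) (R := 1 / 4) (C := maj k) (by norm_num) (differentiable_rf k).diffContOnCl
    fun a ha => norm_rf_le (norm_le_of_mem_closedBall_half (Metric.sphere_subset_closedBall ha)) k
  rw [deriv_rf_half, norm_neg] at h
  linarith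

/-- The case of first powers: differentiate `tsum_rf_div` in `a` at `1/2`. -/
lemma tsum_cf_div {s : ℂ} (hs : ∀ n : ℕ, s ≠ -n) (hs' : ∀ n : ℕ, s + 1 / 2 ≠ -n) :
    ∑' k : ℕ, cf k / (s + k) = (Real.sqrt Real.pi : ℂ) *
      (Complex.Gamma s / Complex.Gamma (s + 1 / 2) * (cpsi (1 / 2) - cpsi (s + 1 / 2))) := by
  obtain ⟨δ, hδ, C, hC, hb⟩ := exists_bound hs
  have hhalf : (1 / 2 : ℂ) ∈ Metric.ball (1 / 2 : ℂ) (1 / 4) :=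
    Metric.mem_ball_self (by norm_num)
  have hsum := Complex.hasSum_deriv_of_summable_norm (U := Metric.ball (1 / 2 : ℂ) (1 / 4))
    (F := fun (k : ℕ) a => rf a k / (s + k)) (summable_maj.mul_left C)
    (fun k => ((differentiable_rf k).div_const _).differentiableOn) Metric.isOpen_ball
    (fun k a ha => by
      simpa using norm_div_pow_le hC (hb s (Metric.mem_ball_self hδ) k) (rf a k) 0
        (norm_rf_le (norm_le_of_mem_closedBall_half (Metric.ball_subset_closedBall ha)) k)) hhalf
  simp only [deriv_div_const, deriv_rf_half] at hsum
  have hev : (fun a => ∑' k : ℕ, rf a k / (s + k)) =ᶠ[nhds (1 / 2)]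
      fun a => Complex.Gamma s * Complex.Gamma (1 - a) / Complex.Gamma (s + 1 - a) := by
    filter_upwards [Metric.isOpen_ball.mem_nhds hhalf] with a ha
    exact tsum_rf_div (norm_le_of_mem_closedBall_half (Metric.ball_subset_closedBall ha)) hs
  rw [hev.deriv_eq] at hsum
  have hG1 : Complex.Gamma (1 / 2) ≠ 0 := Complex.Gamma_ne_zero_of_re_pos (by norm_num)
  have hG2 : Complex.Gamma (s + 1 / 2) ≠ 0 := Complex.Gamma_ne_zero hs'
  have e1 : (1 : ℂ) - 1 / 2 = 1 / 2 := by norm_num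
  have e2 : s + 1 - 1 / 2 = s + 1 / 2 := by ring
  have d1 : HasDerivAt (fun a => Complex.Gamma (1 - a)) (-deriv Complex.Gamma (1 / 2)) (1 / 2) := by
    have h : DifferentiableAt ℂ Complex.Gamma (1 / 2) :=
      Complex.differentiableAt_Gamma _ fun m h => half_add_ne m (by rw [h]; ring)
    have h2 : HasDerivAt Complex.Gamma (deriv Complex.Gamma (1 / 2)) (1 - 1 / 2) := by
      rw [e1]; exact h.hasDerivAt
    exact h2.comp_const_sub 1 (1 / 2)
  have d2 : HasDerivAt (fun a => Complex.Gamma (s + 1 - a))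
      (-deriv Complex.Gamma (s + 1 / 2)) (1 / 2) := by
    have h2 : HasDerivAt Complex.Gamma (deriv Complex.Gamma (s + 1 / 2)) (s + 1 - 1 / 2) := by
      rw [e2]; exact (Complex.differentiableAt_Gamma _ hs').hasDerivAt
    exact h2.comp_const_sub (s + 1) (1 / 2)
  have d3 := (d1.const_mul (Complex.Gamma s)).div d2 (by rw [e2]; exact hG2)
  have hd := d3.deriv
  simp only [Pi.div_def] at hd
  rw [hd, e1, e2] at hsum
  have hpi : (Real.sqrt Real.pi : ℂ) = Complex.Gamma (1 / 2) := by
    rw [← Real.Gamma_one_half_eq, ← Complex.Gamma_ofReal]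
    norm_num
  have h := hsum.neg.tsum_eq
  simp only [neg_div, neg_neg] at h
  rw [h, hpi, cpsi, cpsi]
  generalize Complex.Gamma (s + 1 / 2) = g at hG2 ⊢
  generalize Complex.Gamma (1 / 2) = g' at hG1 ⊢
  field_simp
  ring

/-! ### Differentiation in `s` -/

/-- Termwise differentiation in `s`. -/
lemma iteratedDeriv_tsum_cf {p : ℂ} {δ C : ℝ} (hC : 0 < C)
    (hb : ∀ s ∈ Metric.ball p δ, ∀ k : ℕ, (k + 1 : ℝ) ≤ C * ‖s + k‖) (m : ℕ) :
    ∀ s ∈ Metric.ball p δ, iteratedDeriv m (fun s => ∑' k : ℕ, cf k / (s + k)) s =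
      (-1) ^ m * m.factorial * ∑' k : ℕ, cf k / (s + k) ^ (m + 1) := by
  have hne : ∀ s ∈ Metric.ball p δ, ∀ k : ℕ, s + k ≠ 0 := fun s hs k h => by
    have h1 := hb s hs k
    rw [h, norm_zero, mul_zero] at h1
    have : (0 : ℝ) ≤ k := k.cast_nonneg
    linarith
  induction m with
  | zero => intro s _; simp
  | succ m ih =>
    intro s hs
    have hd : ∀ w ∈ Metric.ball p δ, ∀ k : ℕ, HasDerivAt (fun w : ℂ => cf k / (w + k) ^ (m + 1))
        (-(m + 1) * (cf k / (w + k) ^ (m + 1 + 1))) w := fun w hw k => by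
      have h0 := hne w hw k
      have h := (((hasDerivAt_id w).add_const (k : ℂ)).pow (m + 1)).fun_inv
        (pow_ne_zero _ h0)
      convert! h.const_mul (cf k) using 1
      simp only [id, Nat.add_sub_cancel, Pi.pow_apply]
      push_cast
      field_simp
      ring
    have hev : iteratedDeriv m (fun s => ∑' k : ℕ, cf k / (s + k)) =ᶠ[nhds s]
        fun s => (-1) ^ m * m.factorial * ∑' k : ℕ, cf k / (s + k) ^ (m + 1) := by
      filter_upwards [Metric.isOpen_ball.mem_nhds hs] with w hw using ih w hw
    have hsum := Complex.hasSum_deriv_of_summable_norm (U := Metric.ball p δ)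
      (F := fun (k : ℕ) w => cf k / (w + k) ^ (m + 1))
      (u := fun k : ℕ => C ^ (m + 1) * (4 * (maj k / (k + 1))))
      ((summable_maj.mul_left 4).mul_left _)
      (fun k w hw => (hd w hw k).differentiableAt.differentiableWithinAt) Metric.isOpen_ball
      (fun k w hw => by
        have := norm_div_pow_le hC (hb w hw k) (cf k) m (norm_cf_le k)
        rwa [mul_div_assoc] at this) hs
    rw [iteratedDeriv_succ, hev.deriv_eq, deriv_const_mul_field, ← hsum.tsum_eq]
    simp only [(hd s hs _).deriv]
    rw [tsum_mul_left, Nat.factorial_succ]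
    push_cast
    ring


/-- For an integer `m ≥ 0` and `p ∈ ℂ` with neither `p` nor `p + 1/2` a nonpositive integer,
`∑_{k=0}^∞ (H_k − 2H_{2k})·C(2k,k)/(4^k·(p+k)^(m+1))
  = √π·((-1)^m/m!)·(d^m/ds^m)[(Γ(s)/Γ(s+1/2))·(ψ(1/2) − ψ(s+1/2))]|_{s=p}`. -/
theorem sum_central_binom_harmonic (m : ℕ) (p : ℂ) (hp : ∀ n : ℕ, p ≠ -n)
    (hp' : ∀ n : ℕ, p + 1 / 2 ≠ -n) :
    (∑' k : ℕ,
        (Hc k - 2 * Hc (2 * k)) * (Nat.choose (2 * k) k : ℂ) /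
          (4 ^ k * (p + k) ^ (m + 1))) =
      (Real.sqrt Real.pi : ℂ) * ((-1 : ℂ) ^ m / Nat.factorial m) *
        iteratedDeriv m
          (fun s : ℂ =>
            Complex.Gamma s / Complex.Gamma (s + 1 / 2) * (cpsi (1 / 2) - cpsi (s + 1 / 2)))
          p := by
  obtain ⟨δ, hδ, C, hC, hb⟩ := exists_bound hp
  obtain ⟨δ', hδ', C', hC', hb'⟩ := exists_bound hp'
  have hne : ∀ {s : ℂ} {D : ℝ}, (∀ k : ℕ, (k + 1 : ℝ) ≤ D * ‖s + k‖) → ∀ n : ℕ, s ≠ -n := by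
    rintro s D h n rfl
    have h1 := h n
    rw [neg_add_cancel, norm_zero, mul_zero] at h1
    have : (0 : ℝ) ≤ n := n.cast_nonneg
    linarith
  have hev : (fun s => ∑' k : ℕ, cf k / (s + k)) =ᶠ[nhds p] fun s => (Real.sqrt Real.pi : ℂ) *
      (Complex.Gamma s / Complex.Gamma (s + 1 / 2) * (cpsi (1 / 2) - cpsi (s + 1 / 2))) := by
    filter_upwards [Metric.ball_mem_nhds p hδ, Metric.ball_mem_nhds p hδ'] with s h1 h2
    refine tsum_cf_div (hne (hb s h1)) (hne (hb' (s + 1 / 2) ?_))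
    simpa using h2
  have h1 := hev.iteratedDeriv_eq m
  rw [iteratedDeriv_tsum_cf hC hb m p (Metric.mem_ball_self hδ), iteratedDeriv_const_mul_field]
    at h1
  have hm : (m.factorial : ℂ) ≠ 0 := by exact_mod_cast m.factorial_ne_zero
  have hsq : ((-1 : ℂ) ^ m) * (-1) ^ m = 1 := by rw [← mul_pow]; simp
  rw [mul_right_comm, ← h1]
  have : ∀ k : ℕ, (Hc k - 2 * Hc (2 * k)) * (Nat.choose (2 * k) k : ℂ) /
      (4 ^ k * (p + k) ^ (m + 1)) = cf k / (p + k) ^ (m + 1) := fun k => by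
    rw [cf, div_div]
  simp only [this]
  field_simp
  linear_combination (-∑' k : ℕ, cf k / (p + k) ^ (m + 1)) * hsq
end
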